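/- arXiv:cond-mat/0304295 — 7 statements merged into one kernel-verified Lean document; each statement's English description precedes it below -/
import Mathlib

section
/- For every external site x ∈ E and every cell index j ∈ J, the vectors a_x and b_j are orthogonal: ⟪a_x, b_j⟫ = 0. -/
open scoped InnerProductSpace

noncomputable section

/-- The lattice `Λ`: two internal sites `(j,0)=u_j`, `(j,1)=v_j` per cell `j ∈ J`,
together with the external sites `E`. -/
abbrev FBLat (J E : Type*) := (J × Fin 2) ⊕ E

variable {J E : Type*} [Fintype J] [Fintype E] [DecidableEq J] [DecidableEq E]

/-- The standard orthonormal basis vector `e_r` at site `r`. -/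
def esite (r : FBLat J E) : EuclideanSpace ℂ (FBLat J E) := EuclideanSpace.single r 1

/-- `a_x = e_x - (ν/2) Σ_{j : x ∈ C j} (e_{u_j} + e_{v_j})`. -/
def avec (C : J → Finset E) (ν : ℝ) (x : E) : EuclideanSpace ℂ (FBLat J E) :=
  esite (Sum.inr x) -
    ((ν : ℂ) / 2) • ∑ j ∈ Finset.univ.filter (fun j => x ∈ C j),
      (esite (Sum.inl (j, 0)) + esite (Sum.inl (j, 1)))

/-- `b_j = e_{u_j} + e_{v_j} + ν Σ_{x ∈ C j} e_x`. -/
def bvec (C : J → Finset E) (ν : ℝ) (j : J) : EuclideanSpace ℂ (FBLat J E) :=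
  esite (Sum.inl (j, 0)) + esite (Sum.inl (j, 1)) +
    (ν : ℂ) • ∑ x ∈ C j, esite (Sum.inr x)

/-- `d_j = e_{u_j} - e_{v_j}`. -/
def dvec (j : J) : EuclideanSpace ℂ (FBLat J E) :=
  esite (Sum.inl (j, 0)) - esite (Sum.inl (j, 1))

theorem inner_avec_bvec
    (n m : ℕ) (hn : 0 < n) (hm : 0 < m) (C : J → Finset E) (ν : ℝ) (hν : 0 < ν)
    (hCn : ∀ j : J, (C j).card = n)
    (hCm : ∀ x : E, (Finset.univ.filter (fun j => x ∈ C j)).card = m)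
    : ∀ (x : E) (j : J), ⟪avec C ν x, bvec C ν j⟫_ℂ = 0 := by
  intro x j
  -- For `x ∈ C j` the external site contributes `ν` and the two internal sites of cell `j`
  -- contribute `-ν/2` each; for `x ∉ C j` the supports of the two vectors are disjoint.
  simp only [avec, bvec, inner_sub_left, inner_add_left, inner_add_right, inner_smul_left,
    inner_smul_right, sum_inner, inner_sum, esite, EuclideanSpace.inner_single_left,
    PiLp.single_apply]
  by_cases h : x ∈ C j
  · simp only [map_div₀, map_ofNat, Complex.conj_ofReal]
    simp [h]
    ring
  · simp [h]
end
end

section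
/- For all external sites x, y ∈ E: ⟪a_x, a_y⟫ = 1 + m·ν²/2 if x = y, and ⟪a_x, a_y⟫ = ℓ_{x,y}·ν²/4 if x ≠ y, where ℓ_{x,y} = 2·card {j ∈ J | x ∈ C j ∧ y ∈ C j} is the number of internal sites directly connected to both x and y. -/
/-!
Put `w_j = e_{u_j} + e_{v_j}`. Then `⟪w_i, w_j⟫ = 2 δ_{ij}` and every `w_j` is orthogonal to every
`e_x`, so expanding `a_x = e_x - (ν/2) Σ_{j : x ∈ C j} w_j` gives
`⟪a_x, a_y⟫ = δ_{xy} + (ν²/2) * card {j | x ∈ C j ∧ y ∈ C j}` (`inner_avec_avec_eq`).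
For `x = y` the cardinality is `m`.
-/

open scoped InnerProductSpace

noncomputable section

variable {J E : Type*} [Fintype J] [Fintype E] [DecidableEq J] [DecidableEq E]

/-- The Gram matrix of the `a_x` in one formula: each cell containing both `x` and `y` contributes
`(ν/2)² * 2`. -/
lemma inner_avec_avec_eq (C : J → Finset E) (ν : ℝ) (x y : E) :
    ⟪avec C ν x, avec C ν y⟫_ℂ = (if x = y then 1 else 0) +
      ((Finset.univ.filter (fun j => x ∈ C j ∧ y ∈ C j)).card : ℂ) * (ν : ℂ) ^ 2 / 2 := by
  have site (r s : FBLat J E) : ⟪esite r, esite s⟫_ℂ = if r = s then 1 else 0 := by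
    simp [esite, EuclideanSpace.inner_single_left]
  have overlap : (∑ i ∈ Finset.univ.filter (fun j => x ∈ C j),
      ∑ j ∈ Finset.univ.filter (fun j => y ∈ C j), if i = j then (2 : ℂ) else 0) =
      2 * ((Finset.univ.filter (fun j => x ∈ C j ∧ y ∈ C j)).card : ℂ) := by
    simp [Finset.sum_ite_eq, ← Finset.sum_filter, Finset.filter_filter, mul_comm]
  have cell (i j : J) : ⟪(esite (Sum.inl (i, 0)) + esite (Sum.inl (i, 1)) :
      EuclideanSpace ℂ (FBLat J E)), esite (Sum.inl (j, 0)) + esite (Sum.inl (j, 1))⟫_ℂ =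
      if i = j then 2 else 0 := by
    simp only [inner_add_left, inner_add_right, site]
    by_cases h : i = j <;> simp [h]
    norm_num
  have ext_int (z : E) (j : J) : ⟪(esite (Sum.inr z) : EuclideanSpace ℂ (FBLat J E)),
      esite (Sum.inl (j, 0)) + esite (Sum.inl (j, 1))⟫_ℂ = 0 := by
    simp [site]
  have int_ext (z : E) (j : J) : ⟪(esite (Sum.inl (j, 0)) + esite (Sum.inl (j, 1)) :
      EuclideanSpace ℂ (FBLat J E)), esite (Sum.inr z)⟫_ℂ = 0 := by
    simp [site]
  have hconj : (starRingEnd ℂ) ((ν : ℂ) / 2) = (ν : ℂ) / 2 := by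
    rw [map_div₀, Complex.conj_ofReal, Complex.conj_ofNat]
  simp only [avec, inner_sub_left, inner_sub_right, inner_smul_left, inner_smul_right,
    sum_inner, inner_sum, cell, ext_int, int_ext, site, hconj, Finset.sum_const_zero, zero_sub,
    Finset.sum_neg_distrib, ← Finset.mul_sum, Sum.inr.injEq]
  rw [Finset.sum_comm, overlap]
  ring

theorem inner_avec_avec
    (n m : ℕ) (hn : 0 < n) (hm : 0 < m) (C : J → Finset E) (ν : ℝ) (hν : 0 < ν)
    (hCn : ∀ j : J, (C j).card = n)
    (hCm : ∀ x : E, (Finset.univ.filter (fun j => x ∈ C j)).card = m)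
    : (∀ x : E, ⟪avec C ν x, avec C ν x⟫_ℂ = 1 + (m : ℂ) * (ν : ℂ) ^ 2 / 2) ∧
    (∀ x y : E, x ≠ y →
      ⟪avec C ν x, avec C ν y⟫_ℂ =
        ((2 * (Finset.univ.filter (fun j => x ∈ C j ∧ y ∈ C j)).card : ℂ)) * (ν : ℂ) ^ 2 / 4) := by
  refine ⟨fun x => ?_, fun x y hxy => ?_⟩
  · rw [inner_avec_avec_eq]
    simp [hCm]
  · rw [inner_avec_avec_eq, if_neg hxy]
    ring
end
end

section
/- For all cell indices j, k ∈ J: ⟪b_j, b_k⟫ = 2 + n·ν² if j = k, and ⟪b_j, b_k⟫ = ℓ_{j,k}·ν² if j ≠ k, where ℓ_{j,k} = card (C j ∩ C k) is the number of external sites contained in both cells C j and C k. -/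
open scoped InnerProductSpace

noncomputable section

variable {J E : Type*} [Fintype J] [Fintype E] [DecidableEq J] [DecidableEq E]

/-- The inner product of `b_j` and `b_k` for arbitrary `j`, `k`: the internal sites contribute
`2` exactly when `j = k`, and each common external site contributes `ν ^ 2`. -/
theorem inner_bvec_bvec_eq_ite (C : J → Finset E) (ν : ℝ) (j k : J) :
    ⟪bvec C ν j, bvec C ν k⟫_ℂ =
      (if j = k then 2 else 0) + ((C j ∩ C k).card : ℂ) * (ν : ℂ) ^ 2 := by
  have hsite : ∀ r s : FBLat J E, ⟪esite r, esite s⟫_ℂ = if r = s then (1 : ℂ) else 0 := by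
    intro r s
    exact orthonormal_iff_ite.mp (EuclideanSpace.orthonormal_single (𝕜 := ℂ)) r s
  have hext : ∑ x ∈ C k, ∑ y ∈ C j, (if y = x then (1 : ℂ) else 0) = ((C j ∩ C k).card : ℂ) := by
    simp [Finset.inter_comm]
  simp only [bvec, inner_add_left, inner_add_right, inner_smul_left, inner_smul_right,
    sum_inner, inner_sum, hsite, Sum.inl.injEq, Sum.inr.injEq, Prod.mk.injEq, reduceCtorEq,
    if_false, Finset.sum_const_zero, Complex.conj_ofReal,
    zero_add, ← Finset.mul_sum, hext]
  by_cases hjk : j = k <;> simp [hjk] <;> ring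

theorem inner_bvec_bvec
    (n m : ℕ) (hn : 0 < n) (hm : 0 < m) (C : J → Finset E) (ν : ℝ) (hν : 0 < ν)
    (hCn : ∀ j : J, (C j).card = n)
    (hCm : ∀ x : E, (Finset.univ.filter (fun j => x ∈ C j)).card = m)
    : (∀ j : J, ⟪bvec C ν j, bvec C ν j⟫_ℂ = 2 + (n : ℂ) * (ν : ℂ) ^ 2) ∧
    (∀ j k : J, j ≠ k →
      ⟪bvec C ν j, bvec C ν k⟫_ℂ = ((C j ∩ C k).card : ℂ) * (ν : ℂ) ^ 2) := by
  refine ⟨fun j => ?_, fun j k hjk => ?_⟩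
  · rw [inner_bvec_bvec_eq_ite, if_pos rfl, Finset.inter_self, hCn]
  · rw [inner_bvec_bvec_eq_ite, if_neg hjk, zero_add]
end
end

section
/- The combined family of vectors indexed by E ⊕ J ⊕ J that assigns a_x to x ∈ E, b_j to the first copy of j ∈ J, and d_j to the second copy of j ∈ J, is linearly independent in EuclideanSpace ℂ Λ; since this family has card E + 2·card J = card Λ members, it is a basis of EuclideanSpace ℂ Λ. -/
/-!
Suppose `∑ α_x a_x + ∑ β_j b_j + ∑ δ_j d_j = 0`, and put `S_j = ∑_{x ∈ C j} α_x`. The coordinates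
of this relation at `u_j`, `v_j` and `x` read

* `β_j + δ_j = (ν/2) S_j` and `β_j - δ_j = (ν/2) S_j`, hence `δ_j = 0` and `β_j = (ν/2) S_j`;
* `α_x + ν ∑_{j : x ∈ C j} β_j = 0`.

Pairing the last equation with `conj α_x`, summing over `x` and exchanging the sums gives
`∑_x |α_x|² + (ν²/2) ∑_j |S_j|² = 0`, so `α = 0` (`coeff_eq_zero`), and then `β = 0`. The spanning
claim follows by counting dimensions.
-/

open scoped InnerProductSpace

noncomputable section

variable {J E : Type*} [Fintype J] [Fintype E] [DecidableEq J] [DecidableEq E]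

/-- The positivity step: the coordinate equations for the `a`- and `b`-coefficients force the
`a`-coefficients to vanish, because `1 + (ν²/2) MᴴM` is positive definite, where `M` is the
incidence matrix of `C`. -/
lemma coeff_eq_zero (C : J → Finset E) (ν : ℝ) (α : E → ℂ) (β : J → ℂ)
    (hβ : ∀ j, β j = (ν : ℂ) / 2 * ∑ x, if x ∈ C j then α x else 0)
    (hα : ∀ x, α x + (ν : ℂ) * (∑ j, if x ∈ C j then β j else 0) = 0) :
    ∀ x, α x = 0 := by
  have hswap : ∑ x, (starRingEnd ℂ) (α x) * (∑ j, if x ∈ C j then β j else 0)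
      = ∑ j, β j * (starRingEnd ℂ) (∑ x, if x ∈ C j then α x else 0) := by
    simp only [map_sum, Finset.mul_sum]
    rw [Finset.sum_comm]
    refine Finset.sum_congr rfl fun j _ => Finset.sum_congr rfl fun x _ => ?_
    split_ifs <;> simp [mul_comm]
  have hsum : (∑ x, Complex.normSq (α x))
      + ν ^ 2 / 2 * (∑ j, Complex.normSq (∑ x, if x ∈ C j then α x else 0)) = 0 := by
    have h0 : ∑ x, (starRingEnd ℂ) (α x)
        * (α x + (ν : ℂ) * (∑ j, if x ∈ C j then β j else 0)) = 0 :=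
      Finset.sum_eq_zero fun x _ => by rw [hα x, mul_zero]
    simp only [mul_add, Finset.sum_add_distrib, mul_left_comm _ (ν : ℂ)] at h0
    rw [← Finset.mul_sum, hswap] at h0
    apply Complex.ofReal_injective
    push_cast
    simp only [Complex.normSq_eq_conj_mul_self]
    refine Eq.trans ?_ h0
    congr 1
    rw [Finset.mul_sum, Finset.mul_sum]
    refine Finset.sum_congr rfl fun j _ => ?_
    rw [hβ j]
    ring
  have h1 : 0 ≤ ∑ x, Complex.normSq (α x) :=
    Finset.sum_nonneg fun x _ => Complex.normSq_nonneg _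
  have h2 : 0 ≤ ν ^ 2 / 2 * (∑ j, Complex.normSq (∑ x, if x ∈ C j then α x else 0)) :=
    mul_nonneg (by positivity) (Finset.sum_nonneg fun x _ => Complex.normSq_nonneg _)
  have h3 : ∑ x, Complex.normSq (α x) = 0 := by linarith
  intro x
  rw [Finset.sum_eq_zero_iff_of_nonneg fun x _ => Complex.normSq_nonneg _] at h3
  exact Complex.normSq_eq_zero.1 (h3 x (Finset.mem_univ x))

lemma abd_linearIndependent (C : J → Finset E) (ν : ℝ) :
    LinearIndependent ℂ
      (Sum.elim (avec C ν) (Sum.elim (bvec C ν) (dvec (E := E))) :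
        E ⊕ J ⊕ J → EuclideanSpace ℂ (FBLat J E)) := by
  rw [Fintype.linearIndependent_iff]
  intro g hg
  simp only [Fintype.sum_sum_type, Sum.elim_inl, Sum.elim_inr] at hg
  have hu : ∀ j, -((ν : ℂ) / 2 * ∑ x, if x ∈ C j then g (Sum.inl x) else 0)
      + (g (Sum.inr (Sum.inl j)) + g (Sum.inr (Sum.inr j))) = 0 := by
    intro j
    have := congrArg (fun v : EuclideanSpace ℂ (FBLat J E) => v (Sum.inl (j, 0))) hg
    simpa [avec, bvec, dvec, esite, Pi.single_apply, Finset.mul_sum, mul_comm] using this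
  have hv : ∀ j, -((ν : ℂ) / 2 * ∑ x, if x ∈ C j then g (Sum.inl x) else 0)
      + (g (Sum.inr (Sum.inl j)) - g (Sum.inr (Sum.inr j))) = 0 := by
    intro j
    have := congrArg (fun v : EuclideanSpace ℂ (FBLat J E) => v (Sum.inl (j, 1))) hg
    simpa [avec, bvec, dvec, esite, Pi.single_apply, Finset.mul_sum, mul_comm,
      sub_eq_add_neg] using this
  have hx : ∀ x, g (Sum.inl x)
      + (ν : ℂ) * (∑ j, if x ∈ C j then g (Sum.inr (Sum.inl j)) else 0) = 0 := by
    intro x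
    have := congrArg (fun v : EuclideanSpace ℂ (FBLat J E) => v (Sum.inr x)) hg
    simpa [avec, bvec, dvec, esite, Pi.single_apply, Finset.mul_sum, mul_comm] using this
  have hα := coeff_eq_zero C ν (fun x => g (Sum.inl x)) (fun j => g (Sum.inr (Sum.inl j)))
    (fun j => by linear_combination (hu j + hv j) / 2) hx
  simp only [hα, ite_self, Finset.sum_const_zero, mul_zero, neg_zero, zero_add] at hu hv
  rintro (x | j | j)
  · exact hα x
  · linear_combination (hu j + hv j) / 2
  · linear_combination (hu j - hv j) / 2

theorem abd_basis
    (n m : ℕ) (hn : 0 < n) (hm : 0 < m) (C : J → Finset E) (ν : ℝ) (hν : 0 < ν)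
    (hCn : ∀ j : J, (C j).card = n)
    (hCm : ∀ x : E, (Finset.univ.filter (fun j => x ∈ C j)).card = m)
    : LinearIndependent ℂ
      (Sum.elim (avec C ν) (Sum.elim (bvec C ν) (dvec (E := E))) : E ⊕ J ⊕ J → EuclideanSpace ℂ (FBLat J E)) ∧
    Fintype.card (E ⊕ J ⊕ J) = Fintype.card (FBLat J E) ∧
    Submodule.span ℂ
      (Set.range (Sum.elim (avec C ν) (Sum.elim (bvec C ν) (dvec (E := E))))) = ⊤ := by
  have hli := abd_linearIndependent C ν
  have hcard : Fintype.card (E ⊕ J ⊕ J) = Fintype.card (FBLat J E) := by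
    simp only [Fintype.card_sum, Fintype.card_prod, Fintype.card_fin]
    ring
  refine ⟨hli, hcard, hli.span_eq_top_of_card_eq_finrank' ?_⟩
  rw [finrank_euclideanSpace, hcard]
end
end

section
/- For every cell index j ∈ J, the vector d_j is an eigenvector of the single-particle Hamiltonian with eigenvalue 2s': h d_j = 2s'·d_j. Consequently the single-electron spectrum contains a (card J)-fold degenerate flat band at energy 2s'. -/
/-!
The `d_j` are pairwise orthogonal with `⟪d_j, d_j⟫ = 2` (`inner_dvec_dvec`), and each is orthogonal
to every `b_k` (`inner_bvec_dvec`). Hence in `h d_j` the `t`-sum vanishes and only the `j`-th term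
`2 d_j` of the `s'`-sum survives.
-/

open scoped InnerProductSpace

noncomputable section

variable {J E : Type*} [Fintype J] [Fintype E] [DecidableEq J] [DecidableEq E]

/-- The single-particle Hamiltonian
`h v = t Σ_{j ∈ J} ⟪b_j, v⟫ b_j + s' Σ_{j ∈ J} ⟪d_j, v⟫ d_j`
(the inner product being conjugate-linear in the first argument). -/
def ham (C : J → Finset E) (ν t s' : ℝ) :
    EuclideanSpace ℂ (FBLat J E) →ₗ[ℂ] EuclideanSpace ℂ (FBLat J E) :=
  (t : ℂ) • ∑ j, (innerₛₗ ℂ (bvec C ν j)).smulRight (bvec C ν j) +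
    (s' : ℂ) • ∑ j, (innerₛₗ ℂ (dvec (E := E) j)).smulRight (dvec (E := E) j)

/-- `d_k` is orthogonal to every `b_j`: it is antisymmetric under exchanging `u_k` and `v_k`, while
`b_j` is symmetric. -/
theorem inner_bvec_dvec (C : J → Finset E) (ν : ℝ) (j k : J) :
    ⟪bvec C ν j, dvec (E := E) k⟫_ℂ = 0 := by
  simp [bvec, dvec, esite, EuclideanSpace.inner_single_right]

theorem inner_dvec_dvec (j k : J) :
    ⟪dvec (E := E) j, dvec (E := E) k⟫_ℂ = if j = k then 2 else 0 := by
  by_cases h : j = k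
  · subst h
    rw [dvec, inner_sub_left, inner_sub_right, inner_sub_right]
    simp only [esite, EuclideanSpace.inner_single_right]
    simp
    norm_num
  · simp [dvec, esite, EuclideanSpace.inner_single_right, h, Ne.symm h]

theorem ham_dvec_eigen
    (n m : ℕ) (hn : 0 < n) (hm : 0 < m) (C : J → Finset E) (ν : ℝ) (hν : 0 < ν)
    (hCn : ∀ j : J, (C j).card = n)
    (hCm : ∀ x : E, (Finset.univ.filter (fun j => x ∈ C j)).card = m)
    (t s' : ℝ)
    : ∀ j : J, ham C ν t s' (dvec (E := E) j) = ((2 * s' : ℝ) : ℂ) • dvec (E := E) j := by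
  intro k
  simp only [ham, LinearMap.add_apply, LinearMap.smul_apply, LinearMap.sum_apply,
    LinearMap.smulRight_apply, innerₛₗ_apply_apply, inner_bvec_dvec, inner_dvec_dvec, zero_smul,
    Finset.sum_const_zero, smul_zero, zero_add, ite_smul, Finset.sum_ite_eq', Finset.mem_univ,
    if_true, smul_smul]
  push_cast
  rw [mul_comm]
end
end

section
/- If t > 0 and s' > 0, then the kernel of the single-particle Hamiltonian h equals the span of {a_x : x ∈ E}; in particular the zero-energy flat band has dimension exactly card E. -/
/-!
For `t, s' > 0` one has `⟪v, h v⟫ = t Σ |⟪b_j, v⟫|² + s' Σ |⟪d_j, v⟫|²`, so `h v = 0` exactly when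
`v` is orthogonal to every `b_j` and every `d_j` (`mem_ker_ham_iff`). In coordinates these
conditions read `v_{u_j} = v_{v_j} = -(ν/2) Σ_{x ∈ C j} v_x`, that is, `v = Σ_x v_x a_x`
(`ker_ham_eq_span`). The `a_x` are linearly independent because the coordinate of
`Σ_x c_x a_x` at the external site `y` is `c_y`, which gives the dimension.
-/

open scoped InnerProductSpace

noncomputable section

variable {J E : Type*} [Fintype J] [Fintype E] [DecidableEq J] [DecidableEq E]

lemma inner_dvec (j : J) (v : EuclideanSpace ℂ (FBLat J E)) :
    ⟪dvec j, v⟫_ℂ = v (Sum.inl (j, 0)) - v (Sum.inl (j, 1)) := by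
  simp [dvec, esite, EuclideanSpace.inner_single_left]

lemma inner_bvec (C : J → Finset E) (ν : ℝ) (j : J) (v : EuclideanSpace ℂ (FBLat J E)) :
    ⟪bvec C ν j, v⟫_ℂ =
      v (Sum.inl (j, 0)) + v (Sum.inl (j, 1)) + ν * ∑ x ∈ C j, v (Sum.inr x) := by
  simp [bvec, esite, EuclideanSpace.inner_single_left]

lemma avec_apply_inr (C : J → Finset E) (ν : ℝ) (x y : E) :
    avec C ν x (Sum.inr y) = if y = x then 1 else 0 := by
  simp [avec, esite]

lemma avec_apply_inl (C : J → Finset E) (ν : ℝ) (x : E) (j : J) (i : Fin 2) :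
    avec C ν x (Sum.inl (j, i)) = if x ∈ C j then -((ν : ℂ) / 2) else 0 := by
  by_cases hx : x ∈ C j <;> fin_cases i <;> simp [avec, esite, Pi.single_apply, hx]

lemma sum_smul_avec_apply_inr (C : J → Finset E) (ν : ℝ) (c : E → ℂ) (y : E) :
    (∑ x, c x • avec C ν x) (Sum.inr y) = c y := by
  simp [avec_apply_inr]

lemma sum_smul_avec_apply_inl (C : J → Finset E) (ν : ℝ) (c : E → ℂ) (j : J) (i : Fin 2) :
    (∑ x, c x • avec C ν x) (Sum.inl (j, i)) = -((ν : ℂ) / 2) * ∑ x ∈ C j, c x := by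
  simp [avec_apply_inl, ← Finset.sum_mul, mul_comm]

lemma linearIndependent_avec (C : J → Finset E) (ν : ℝ) :
    LinearIndependent ℂ (avec C ν) := by
  rw [Fintype.linearIndependent_iff]
  intro c hc y
  rw [← sum_smul_avec_apply_inr C ν c y, hc]
  rfl

/-- The quadratic form of the Hamiltonian is a weighted sum of squared moduli, so for positive
weights a null vector is orthogonal to every `b_j` and every `d_j`. -/
lemma mem_ker_ham_iff (C : J → Finset E) (ν t s' : ℝ) (ht : 0 < t) (hs : 0 < s')
    (v : EuclideanSpace ℂ (FBLat J E)) :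
    v ∈ LinearMap.ker (ham C ν t s') ↔
      (∀ j, ⟪bvec C ν j, v⟫_ℂ = 0) ∧ ∀ j, ⟪dvec j, v⟫_ℂ = 0 := by
  rw [LinearMap.mem_ker]
  constructor
  · intro h
    have hq : ⟪v, ham C ν t s' v⟫_ℂ =
        ((t * ∑ j, ‖⟪bvec C ν j, v⟫_ℂ‖ ^ 2 + s' * ∑ j, ‖⟪dvec j, v⟫_ℂ‖ ^ 2 : ℝ) : ℂ) := by
      have key (w : EuclideanSpace ℂ (FBLat J E)) :
          ⟪w, v⟫_ℂ * ⟪v, w⟫_ℂ = (‖⟪w, v⟫_ℂ‖ : ℂ) ^ 2 := by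
        rw [← inner_conj_symm v w, Complex.mul_conj']
      simp [ham, key]
    rw [h, inner_zero_right, eq_comm, Complex.ofReal_eq_zero] at hq
    have hb : 0 ≤ ∑ j, ‖⟪bvec C ν j, v⟫_ℂ‖ ^ 2 := by positivity
    have hd : 0 ≤ ∑ j : J, ‖⟪dvec j, v⟫_ℂ‖ ^ 2 := by positivity
    have hb0 : ∑ j, ‖⟪bvec C ν j, v⟫_ℂ‖ ^ 2 = 0 := by nlinarith [mul_nonneg hs.le hd]
    have hd0 : ∑ j : J, ‖⟪dvec j, v⟫_ℂ‖ ^ 2 = 0 := by nlinarith [mul_nonneg ht.le hb]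
    rw [Finset.sum_eq_zero_iff_of_nonneg (fun _ _ => by positivity)] at hb0 hd0
    exact ⟨fun j => by simpa using hb0 j (Finset.mem_univ j),
      fun j => by simpa using hd0 j (Finset.mem_univ j)⟩
  · rintro ⟨hb, hd⟩
    simp [ham, hb, hd]

/-- A vector orthogonal to all `b_j` and `d_j` is determined by its external coordinates, which
are its coefficients in the family `a_x`. -/
lemma ker_ham_eq_span (C : J → Finset E) (ν t s' : ℝ) (ht : 0 < t) (hs : 0 < s') :
    LinearMap.ker (ham C ν t s') = Submodule.span ℂ (Set.range (avec C ν)) := by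
  ext v
  rw [mem_ker_ham_iff C ν t s' ht hs, Submodule.mem_span_range_iff_exists_fun]
  simp only [inner_bvec, inner_dvec]
  constructor
  · rintro ⟨hb, hd⟩
    refine ⟨fun x => v (Sum.inr x), ?_⟩
    ext r
    rcases r with ⟨j, i⟩ | y
    · rw [sum_smul_avec_apply_inl]
      fin_cases i <;> simp only [Fin.zero_eta, Fin.mk_one]
      · linear_combination (-1 / 2 : ℂ) * hb j - (1 / 2 : ℂ) * hd j
      · linear_combination (-1 / 2 : ℂ) * hb j + (1 / 2 : ℂ) * hd j
    · exact sum_smul_avec_apply_inr C ν _ y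
  · rintro ⟨c, rfl⟩
    simp only [sum_smul_avec_apply_inl, sum_smul_avec_apply_inr]
    exact ⟨fun j => by ring, fun j => by ring⟩

theorem ham_kernel_eq_span_avec
    (n m : ℕ) (hn : 0 < n) (hm : 0 < m) (C : J → Finset E) (ν : ℝ) (hν : 0 < ν)
    (hCn : ∀ j : J, (C j).card = n)
    (hCm : ∀ x : E, (Finset.univ.filter (fun j => x ∈ C j)).card = m)
    (t s' : ℝ) (ht : 0 < t) (hs : 0 < s')
    : LinearMap.ker (ham C ν t s') = Submodule.span ℂ (Set.range (avec C ν)) ∧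
    Module.finrank ℂ (LinearMap.ker (ham C ν t s')) = Fintype.card E := by
  have hker := ker_ham_eq_span C ν t s' ht hs
  refine ⟨hker, ?_⟩
  rw [hker]
  exact finrank_span_eq_card (linearIndependent_avec C ν)
end
end

section
/- If t > 0 and s' ≥ 0, then h maps the span of {b_j : j ∈ J} into itself, and h is positive definite on this span: for every nonzero v in the span of {b_j : j ∈ J}, the inner product ⟪v, h v⟫ is a strictly positive real number. (This expresses that the remaining single-electron eigenvalues, beyond the flat bands at 0 and 2s', are positive.) -/
/-!
Every `d_k` is orthogonal to every `b_j`, because `b_j` has equal coefficients on the two internal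
sites of each cell (`inner_dvec_bvec`). Hence on the span of the `b_j` the Hamiltonian reduces to
`h v = t Σ_j ⟪b_j, v⟫ b_j` (`ham_apply_of_mem`), which lies in the span, and
`⟪v, h v⟫ = t Σ_j ‖⟪b_j, v⟫‖²`. If this sum vanished, `v` would be orthogonal to the span
that contains it, so `v = 0`.
-/

open scoped InnerProductSpace

noncomputable section

variable {J E : Type*} [Fintype J] [Fintype E] [DecidableEq J] [DecidableEq E]

theorem inner_dvec_bvec (C : J → Finset E) (ν : ℝ) (k j : J) :
    ⟪dvec (E := E) k, bvec C ν j⟫_ℂ = 0 := by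
  simp [dvec, bvec, esite, EuclideanSpace.inner_single_left]

theorem inner_dvec_of_mem (C : J → Finset E) (ν : ℝ) (k : J)
    {v : EuclideanSpace ℂ (FBLat J E)} (hv : v ∈ Submodule.span ℂ (Set.range (bvec C ν))) :
    ⟪dvec (E := E) k, v⟫_ℂ = 0 := by
  induction hv using Submodule.span_induction with
  | mem x hx => obtain ⟨j, rfl⟩ := hx; exact inner_dvec_bvec C ν k j
  | zero => simp
  | add x y _ _ hx hy => rw [inner_add_right, hx, hy, add_zero]
  | smul c x _ hx => rw [inner_smul_right, hx, mul_zero]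

/-- On the span of the `b_j` the `d`-part of the Hamiltonian vanishes. -/
theorem ham_apply_of_mem (C : J → Finset E) (ν t s' : ℝ)
    {v : EuclideanSpace ℂ (FBLat J E)} (hv : v ∈ Submodule.span ℂ (Set.range (bvec C ν))) :
    ham C ν t s' v = (t : ℂ) • ∑ j, ⟪bvec C ν j, v⟫_ℂ • bvec C ν j := by
  simp [ham, inner_dvec_of_mem C ν _ hv]

/-- A vector in the span of the `b_j` orthogonal to every `b_j` is orthogonal to itself. -/
theorem eq_zero_of_inner_bvec_eq_zero (C : J → Finset E) (ν : ℝ)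
    {v : EuclideanSpace ℂ (FBLat J E)} (hv : v ∈ Submodule.span ℂ (Set.range (bvec C ν)))
    (h : ∀ j, ⟪bvec C ν j, v⟫_ℂ = 0) : v = 0 := by
  have key : ∀ w ∈ Submodule.span ℂ (Set.range (bvec C ν)), ⟪w, v⟫_ℂ = 0 := by
    intro w hw
    induction hw using Submodule.span_induction with
    | mem x hx => obtain ⟨j, rfl⟩ := hx; exact h j
    | zero => simp
    | add x y _ _ hx hy => rw [inner_add_left, hx, hy, add_zero]
    | smul c x _ hx => rw [inner_smul_left, hx, mul_zero]
  exact inner_self_eq_zero.mp (key v hv)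

theorem ham_posdef_on_bspan
    (n m : ℕ) (hn : 0 < n) (hm : 0 < m) (C : J → Finset E) (ν : ℝ) (hν : 0 < ν)
    (hCn : ∀ j : J, (C j).card = n)
    (hCm : ∀ x : E, (Finset.univ.filter (fun j => x ∈ C j)).card = m)
    (t s' : ℝ) (ht : 0 < t) (hs : 0 ≤ s')
    : (∀ v ∈ Submodule.span ℂ (Set.range (bvec C ν)),
      ham C ν t s' v ∈ Submodule.span ℂ (Set.range (bvec C ν))) ∧
    (∀ v ∈ Submodule.span ℂ (Set.range (bvec C ν)), v ≠ 0 →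
      ∃ r : ℝ, 0 < r ∧ ⟪v, ham C ν t s' v⟫_ℂ = (r : ℂ)) := by
  refine ⟨fun v hv => ?_, fun v hv hv0 => ?_⟩
  · rw [ham_apply_of_mem C ν t s' hv]
    exact Submodule.smul_mem _ _ (Submodule.sum_mem _ fun j _ =>
      Submodule.smul_mem _ _ (Submodule.subset_span ⟨j, rfl⟩))
  · refine ⟨t * ∑ j, ‖⟪bvec C ν j, v⟫_ℂ‖ ^ 2, mul_pos ht ?_, ?_⟩
    · obtain ⟨j, hj⟩ : ∃ j, ⟪bvec C ν j, v⟫_ℂ ≠ 0 := by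
        by_contra! hcon
        exact hv0 (eq_zero_of_inner_bvec_eq_zero C ν hv hcon)
      exact Finset.sum_pos' (fun _ _ => sq_nonneg _)
        ⟨j, Finset.mem_univ j, pow_pos (norm_pos_iff.mpr hj) 2⟩
    · rw [ham_apply_of_mem C ν t s' hv, inner_smul_right, inner_sum]
      push_cast
      congr 1
      refine Finset.sum_congr rfl fun j _ => ?_
      rw [inner_smul_right, ← inner_conj_symm v (bvec C ν j)]
      exact Complex.mul_conj' _
end
end
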